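/- For every δ > 0 and every M₀ > 0 there exists C > 0 with the following property. Let K be a positive integer and let A be a finite nonempty set of positive integers with |A| = n, and set M = sup_{x∈ℝ} Σ_{a∈A} S_K(a·x) and m_K = −inf_{x∈ℝ} S_K(x). If M ≤ M₀, then there exists a positive integer k with k ≤ C·K·n²·log(C·n·K) such that (∫₀¹ (Σ_{a∈A} (S_K(a·x) + m_K))^{2k} dx)^{1/(2k)} > M + n·m_K − δ. -/

import Mathlib

/-!
Write `F(x) = ∑_{a ∈ A} (S_K(a x) + m_K)`, whose supremum is `P = M + n m_K`. The function `F` is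
within `δ / 2` of `P` on a set of measure at least `N ^ (-n)`, where `N` is of order `n K² / δ`:
cut `[0, 1)` into at most `N ^ n` cells according to the position of the fractional parts of `a x`
(`a ∈ A`) among `N` equal arcs. On a cell of measure at least `N ^ (-n)` any two points `x, y`
have `a (x - y)` within `1 / N` of an integer, so, as `S_K` is `1`-periodic and `O(K²)`-Lipschitz
(`Sel_add_int`, `Sel_lip`), `F(x₀ + x - y)` is close to `F(x₀)` for every `x` in the cell; here
`x₀` is a near-maximum point. Hence `‖F‖_{2k} ≥ (P - δ / 2) N ^ (-n / (2k))`, and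
`N ^ (-n / (2k)) ≥ 1 - n log N / (2k)`. Since the trivial bound `|S_K| = O(K)` (`Sel_abs_le`)
gives `P = O(n K)`, the loss is below `δ / 2` once `k` exceeds a constant times
`n² K log N`.
-/

open Real

/-- The Fejér kernel `Δ_K(x) = ∑_{|k| ≤ K} (1 − |k|/K) e(kx)`, written via cosines
(the imaginary parts cancel by symmetry). -/
noncomputable def Δ (K : ℕ) (x : ℝ) : ℝ :=
  ∑ k ∈ Finset.Icc (-(K : ℤ)) (K : ℤ), (1 - |(k : ℝ)| / K) * Real.cos (2 * π * k * x)

/-- The Vaaler polynomial `V_K`. -/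
noncomputable def V (K : ℕ) (x : ℝ) : ℝ :=
  (1 / ((K : ℝ) + 1)) *
      ∑ k ∈ Finset.Icc 1 K, ((k : ℝ) / (K + 1) - 1 / 2) * Δ (K + 1) (x - k / (K + 1))
    + (1 / (2 * π * (K + 1))) * Real.sin (2 * π * (K + 1) * x)
    - (1 / (2 * π)) * Δ (K + 1) x * Real.sin (2 * π * x)

/-- The Beurling–Selberg function `B_K`. -/
noncomputable def B (K : ℕ) (x : ℝ) : ℝ := V K x + (1 / (2 * ((K : ℝ) + 1))) * Δ (K + 1) x

/-- The Selberg polynomial `S_K`, a minorant of `1_{[1/3,2/3)} - 1/3`. -/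
noncomputable def Sel (K : ℕ) (x : ℝ) : ℝ := 1 / 3 - B K (2 / 3 - x) - B K (x - 1 / 3)

/-! ### Size, Lipschitz constant and periodicity of the Selberg polynomial -/

lemma Δ_abs_le (K : ℕ) (hK : 0 < K) (x : ℝ) : |Δ (K + 1) x| ≤ 5 * K := by
  have hK' : (1 : ℝ) ≤ K := by exact_mod_cast hK
  unfold Δ
  calc |∑ k ∈ Finset.Icc (-((K + 1 : ℕ) : ℤ)) ((K + 1 : ℕ) : ℤ),
        (1 - |(k : ℝ)| / (K + 1 : ℕ)) * Real.cos (2 * π * k * x)|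
      ≤ ∑ k ∈ Finset.Icc (-((K + 1 : ℕ) : ℤ)) ((K + 1 : ℕ) : ℤ), (1 : ℝ) := by
        refine (Finset.abs_sum_le_sum_abs _ _).trans (Finset.sum_le_sum fun k hk => ?_)
        rw [Finset.mem_Icc] at hk
        have h1 : |(k : ℝ)| ≤ (K + 1 : ℕ) := by
          have : |k| ≤ ((K + 1 : ℕ) : ℤ) := abs_le.2 hk
          exact_mod_cast this
        have h2 : |(k : ℝ)| / (K + 1 : ℕ) ≤ 1 := div_le_one_of_le₀ h1 (by positivity)
        have h3 : 0 ≤ |(k : ℝ)| / (K + 1 : ℕ) := by positivity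
        rw [abs_mul]
        refine mul_le_one₀ (abs_le.2 ⟨by linarith, by linarith⟩) (abs_nonneg _)
          (Real.abs_cos_le_one _)
    _ ≤ 5 * K := by
        rw [Finset.sum_const, Int.card_Icc, nsmul_eq_mul, mul_one]
        have : (((K + 1 : ℕ) : ℤ) + 1 - (-((K + 1 : ℕ) : ℤ))).toNat = 2 * K + 3 := by omega
        rw [this]
        push_cast
        linarith

lemma Δ_lip (K : ℕ) (hK : 0 < K) (x y : ℝ) :
    |Δ (K + 1) x - Δ (K + 1) y| ≤ 80 * K ^ 2 * |x - y| := by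
  have hK' : (1 : ℝ) ≤ K := by exact_mod_cast hK
  unfold Δ
  rw [← Finset.sum_sub_distrib]
  calc |∑ k ∈ Finset.Icc (-((K + 1 : ℕ) : ℤ)) ((K + 1 : ℕ) : ℤ),
        ((1 - |(k : ℝ)| / (K + 1 : ℕ)) * Real.cos (2 * π * k * x)
          - (1 - |(k : ℝ)| / (K + 1 : ℕ)) * Real.cos (2 * π * k * y))|
      ≤ ∑ k ∈ Finset.Icc (-((K + 1 : ℕ) : ℤ)) ((K + 1 : ℕ) : ℤ), (16 * K * |x - y|) := by
        refine (Finset.abs_sum_le_sum_abs _ _).trans (Finset.sum_le_sum fun k hk => ?_)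
        rw [Finset.mem_Icc] at hk
        have h1 : |(k : ℝ)| ≤ (K + 1 : ℕ) := by
          have : |k| ≤ ((K + 1 : ℕ) : ℤ) := abs_le.2 hk
          exact_mod_cast this
        have h2 : |(k : ℝ)| / (K + 1 : ℕ) ≤ 1 := div_le_one_of_le₀ h1 (by positivity)
        have h3 : 0 ≤ |(k : ℝ)| / (K + 1 : ℕ) := by positivity
        rw [← mul_sub, abs_mul]
        have h4 : |1 - |(k : ℝ)| / (K + 1 : ℕ)| ≤ 1 := abs_le.2 ⟨by linarith, by linarith⟩
        have h5 := Real.abs_cos_sub_cos_le (2 * π * k * x) (2 * π * k * y)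
        have h6 : |2 * π * k * x - 2 * π * k * y| ≤ 16 * K * |x - y| := by
          rw [← mul_sub, abs_mul, abs_mul, abs_mul, abs_of_pos Real.pi_pos, abs_two]
          have h7 : |(k : ℝ)| ≤ 2 * K := by push_cast at h1; linarith
          have := Real.pi_le_four
          gcongr ?_ * |x - y|
          nlinarith [abs_nonneg (k : ℝ), Real.pi_pos]
        nlinarith [abs_nonneg (Real.cos (2 * π * k * x) - Real.cos (2 * π * k * y))]
    _ ≤ 80 * K ^ 2 * |x - y| := by
        rw [Finset.sum_const, Int.card_Icc, nsmul_eq_mul]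
        have : (((K + 1 : ℕ) : ℤ) + 1 - (-((K + 1 : ℕ) : ℤ))).toNat = 2 * K + 3 := by omega
        rw [this]
        calc ((2 * K + 3 : ℕ) : ℝ) * (16 * K * |x - y|) ≤ (5 * K) * (16 * K * |x - y|) := by
              gcongr
              push_cast
              linarith
          _ = _ := by ring

lemma Δ_add_int (K : ℕ) (x : ℝ) (j : ℤ) : Δ K (x + j) = Δ K x := by
  unfold Δ
  refine Finset.sum_congr rfl fun k _ => ?_
  have : 2 * π * k * (x + j) = 2 * π * k * x + ((k * j : ℤ) : ℝ) * (2 * π) := by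
    push_cast; ring
  rw [this, Real.cos_add_int_mul_two_pi]

lemma V_add_int (K : ℕ) (x : ℝ) (j : ℤ) : V K (x + j) = V K x := by
  unfold V
  have h1 : 2 * π * ((K : ℝ) + 1) * (x + j)
      = 2 * π * (K + 1) * x + (((K + 1) * j : ℤ) : ℝ) * (2 * π) := by push_cast; ring
  have h2 : 2 * π * (x + j) = 2 * π * x + (j : ℝ) * (2 * π) := by ring
  have h3 : ∀ k : ℕ, x + j - k / ((K : ℝ) + 1) = (x - k / (K + 1)) + j := fun k => by ring
  simp only [h1, h2, h3, Real.sin_add_int_mul_two_pi, Δ_add_int]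

lemma B_add_int (K : ℕ) (x : ℝ) (j : ℤ) : B K (x + j) = B K x := by
  unfold B; rw [V_add_int, Δ_add_int]

lemma Sel_add_int (K : ℕ) (x : ℝ) (j : ℤ) : Sel K (x + j) = Sel K x := by
  unfold Sel
  have h1 : 2 / 3 - (x + j) = (2 / 3 - x) + ((-j : ℤ) : ℝ) := by push_cast; ring
  have h2 : x + j - 1 / 3 = (x - 1 / 3) + j := by ring
  rw [h1, h2, B_add_int, B_add_int]

lemma coef_abs_le (K k : ℕ) (hk : k ∈ Finset.Icc 1 K) :
    |(k : ℝ) / (K + 1) - 1 / 2| ≤ 1 / 2 := by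
  rw [Finset.mem_Icc] at hk
  have h0 : (k : ℝ) ≤ K + 1 := by exact_mod_cast (by omega : k ≤ K + 1)
  have h1 : (k : ℝ) / (K + 1) ≤ 1 := div_le_one_of_le₀ h0 (by positivity)
  have h2 : 0 ≤ (k : ℝ) / (K + 1) := by positivity
  exact abs_le.2 ⟨by linarith, by linarith⟩

/-- The averaging over the shifts `k / (K + 1)` in the definition of `V` does not increase a uniform
bound. -/
lemma avg_abs_le (K : ℕ) (f : ℕ → ℝ) (b : ℝ) (hb : 0 ≤ b) (hf : ∀ k, |f k| ≤ b) :
    |(1 / ((K : ℝ) + 1)) * ∑ k ∈ Finset.Icc 1 K, ((k : ℝ) / (K + 1) - 1 / 2) * f k| ≤ b := by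
  have h : |∑ k ∈ Finset.Icc 1 K, ((k : ℝ) / (K + 1) - 1 / 2) * f k| ≤ K * (1 / 2 * b) := by
    calc _ ≤ ∑ k ∈ Finset.Icc 1 K, (1 / 2 * b) := by
          refine (Finset.abs_sum_le_sum_abs _ _).trans (Finset.sum_le_sum fun k hk => ?_)
          rw [abs_mul]
          exact mul_le_mul (coef_abs_le K k hk) (hf k) (abs_nonneg _) (by norm_num)
      _ = _ := by simp
  rw [abs_mul, abs_of_pos (by positivity), one_div, inv_mul_le_iff₀ (by positivity)]
  have : 0 ≤ (K : ℝ) * b := by positivity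
  linarith

lemma one_div_two_pi_le_one : 1 / (2 * π) ≤ 1 := by
  rw [div_le_one (by positivity)]
  linarith [Real.two_le_pi]

lemma V_abs_le (K : ℕ) (hK : 0 < K) (x : ℝ) : |V K x| ≤ 11 * K := by
  have hK' : (1 : ℝ) ≤ K := by exact_mod_cast hK
  unfold V
  have h1 := avg_abs_le K (fun k => Δ (K + 1) (x - k / (K + 1))) (5 * K) (by positivity)
    (fun k => Δ_abs_le K hK _)
  have h2 : |(1 / (2 * π * ((K : ℝ) + 1))) * Real.sin (2 * π * (K + 1) * x)| ≤ K := by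
    rw [abs_mul, abs_of_pos (by positivity)]
    have : 1 / (2 * π * ((K : ℝ) + 1)) ≤ 1 := by
      rw [div_le_one (by positivity)]
      nlinarith [Real.two_le_pi]
    exact (mul_le_one₀ this (abs_nonneg _) (Real.abs_sin_le_one _)).trans hK'
  have h3 : |(1 / (2 * π)) * Δ (K + 1) x * Real.sin (2 * π * x)| ≤ 5 * K := by
    rw [abs_mul, abs_mul, abs_of_pos (by positivity : 0 < 1 / (2 * π))]
    calc _ ≤ 1 * (5 * (K : ℝ)) * 1 := by
          gcongr
          · exact one_div_two_pi_le_one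
          · exact Δ_abs_le K hK x
          · exact Real.abs_sin_le_one _
      _ = _ := by ring
  rw [abs_le] at *
  constructor <;> linarith [h1.1, h1.2, h2.1, h2.2, h3.1, h3.2]

lemma V_lip (K : ℕ) (hK : 0 < K) (x y : ℝ) : |V K x - V K y| ≤ 201 * K ^ 2 * |x - y| := by
  have hK' : (1 : ℝ) ≤ K := by exact_mod_cast hK
  have hxy := abs_nonneg (x - y)
  have h1 := avg_abs_le K (fun k => Δ (K + 1) (x - k / (K + 1)) - Δ (K + 1) (y - k / (K + 1)))
    (80 * K ^ 2 * |x - y|) (by positivity)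
    (fun k => by simpa using Δ_lip K hK (x - k / (K + 1)) (y - k / (K + 1)))
  simp only [mul_sub _ (Δ _ _) (Δ _ _), Finset.sum_sub_distrib] at h1
  have h2 : |(1 / (2 * π * ((K : ℝ) + 1))) *
      (Real.sin (2 * π * (K + 1) * x) - Real.sin (2 * π * (K + 1) * y))| ≤ |x - y| := by
    have h := Real.abs_sin_sub_sin_le (2 * π * (K + 1) * x) (2 * π * (K + 1) * y)
    rw [← mul_sub, abs_mul (2 * π * ((K : ℝ) + 1)),
      abs_of_pos (by positivity : 0 < 2 * π * ((K : ℝ) + 1))] at h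
    rw [abs_mul, abs_of_pos (by positivity), one_div, inv_mul_le_iff₀ (by positivity)]
    exact h
  have h3 : |(1 / (2 * π)) * (Δ (K + 1) x * Real.sin (2 * π * x)
      - Δ (K + 1) y * Real.sin (2 * π * y))| ≤ 120 * K ^ 2 * |x - y| := by
    have e : Δ (K + 1) x * Real.sin (2 * π * x) - Δ (K + 1) y * Real.sin (2 * π * y)
        = (Δ (K + 1) x - Δ (K + 1) y) * Real.sin (2 * π * x)
          + Δ (K + 1) y * (Real.sin (2 * π * x) - Real.sin (2 * π * y)) := by ring
    have hs := Real.abs_sin_sub_sin_le (2 * π * x) (2 * π * y)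
    rw [← mul_sub, abs_mul (2 * π), abs_of_pos (by positivity : 0 < 2 * π)] at hs
    have hs' : |Real.sin (2 * π * x) - Real.sin (2 * π * y)| ≤ 8 * |x - y| := by
      nlinarith [Real.pi_le_four]
    have hb : |Δ (K + 1) x * Real.sin (2 * π * x) - Δ (K + 1) y * Real.sin (2 * π * y)|
        ≤ 120 * K ^ 2 * |x - y| := by
      rw [e]
      refine (abs_add_le _ _).trans ?_
      rw [abs_mul, abs_mul]
      calc _ ≤ 80 * (K : ℝ) ^ 2 * |x - y| * 1 + 5 * K * (8 * |x - y|) := by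
            gcongr
            · exact Δ_lip K hK x y
            · exact Real.abs_sin_le_one _
            · exact Δ_abs_le K hK y
        _ ≤ _ := by
            have : (K : ℝ) * |x - y| ≤ K ^ 2 * |x - y| := by gcongr; nlinarith
            linarith
    rw [abs_mul, abs_of_pos (by positivity : 0 < 1 / (2 * π))]
    calc _ ≤ 1 * (120 * (K : ℝ) ^ 2 * |x - y|) := by
          gcongr
          exact one_div_two_pi_le_one
      _ = _ := one_mul _
  have h4 : |x - y| ≤ K ^ 2 * |x - y| := le_mul_of_one_le_left hxy (by nlinarith)
  unfold V
  rw [abs_le] at h1 h2 h3 ⊢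
  constructor <;> linarith [h1.1, h1.2, h2.1, h2.2, h3.1, h3.2]

lemma one_div_two_mul_succ_le_one (K : ℕ) : 1 / (2 * ((K : ℝ) + 1)) ≤ 1 := by
  rw [div_le_one (by positivity)]
  linarith [Nat.cast_nonneg (α := ℝ) K]

lemma B_abs_le (K : ℕ) (hK : 0 < K) (x : ℝ) : |B K x| ≤ 16 * K := by
  unfold B
  refine (abs_add_le _ _).trans ?_
  rw [abs_mul, abs_of_pos (by positivity : 0 < 1 / (2 * ((K : ℝ) + 1)))]
  calc _ ≤ 11 * (K : ℝ) + 1 * (5 * K) := by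
        gcongr
        · exact V_abs_le K hK x
        · exact one_div_two_mul_succ_le_one K
        · exact Δ_abs_le K hK x
    _ = _ := by ring

lemma B_lip (K : ℕ) (hK : 0 < K) (x y : ℝ) : |B K x - B K y| ≤ 281 * K ^ 2 * |x - y| := by
  unfold B
  rw [add_sub_add_comm, ← mul_sub]
  refine (abs_add_le _ _).trans ?_
  rw [abs_mul, abs_of_pos (by positivity : 0 < 1 / (2 * ((K : ℝ) + 1)))]
  calc _ ≤ 201 * (K : ℝ) ^ 2 * |x - y| + 1 * (80 * K ^ 2 * |x - y|) := by
        gcongr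
        · exact V_lip K hK x y
        · exact one_div_two_mul_succ_le_one K
        · exact Δ_lip K hK x y
    _ = _ := by ring

lemma Sel_abs_le (K : ℕ) (hK : 0 < K) (x : ℝ) : |Sel K x| ≤ 33 * K := by
  have hK' : (1 : ℝ) ≤ K := by exact_mod_cast hK
  have h1 := abs_le.1 (B_abs_le K hK (2 / 3 - x))
  have h2 := abs_le.1 (B_abs_le K hK (x - 1 / 3))
  unfold Sel
  exact abs_le.2 ⟨by linarith [h1.2, h2.2], by linarith [h1.1, h2.1]⟩

lemma Sel_lip (K : ℕ) (hK : 0 < K) (x y : ℝ) : |Sel K x - Sel K y| ≤ 562 * K ^ 2 * |x - y| := by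
  have h1 := B_lip K hK (2 / 3 - x) (2 / 3 - y)
  have h2 := B_lip K hK (x - 1 / 3) (y - 1 / 3)
  rw [sub_sub_sub_cancel_left, abs_sub_comm y x] at h1
  rw [sub_sub_sub_cancel_right] at h2
  unfold Sel
  rw [abs_le] at *
  constructor <;> linarith [h1.1, h1.2, h2.1, h2.2]

lemma Δ_cont (K : ℕ) : Continuous (Δ K) := by
  unfold Δ; fun_prop

lemma V_cont (K : ℕ) : Continuous (V K) := by
  have := Δ_cont (K + 1)
  unfold V; fun_prop

lemma Sel_cont (K : ℕ) : Continuous (Sel K) := by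
  have h1 := Δ_cont (K + 1)
  have h2 := V_cont K
  unfold Sel B; fun_prop

/-! ### Simultaneous Diophantine approximation on a set of large measure -/

open MeasureTheory Set in
/-- Simultaneous approximation by pigeonhole: some `D ⊆ [0, 1)` of measure at least `N ^ (-|A|)`
is such that `a * (x - y)` lies within `1 / N` of an integer for all `x, y ∈ D`, `a ∈ A`. -/
lemma exists_cell (A : Finset ℕ) (N : ℕ) (hN : 0 < N) :
    ∃ D : Set ℝ, MeasurableSet D ∧ D ⊆ Ico 0 1 ∧
      (((N : ℝ) ^ A.card)⁻¹ ≤ (volume.real D)) ∧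
      ∀ x ∈ D, ∀ y ∈ D, ∀ a ∈ A, ∃ j : ℤ, |(a : ℝ) * (x - y) - j| ≤ 1 / N := by
  have hN' : (0 : ℝ) < N := by exact_mod_cast hN
  let φ : ℝ → (A → ℕ) := fun x a => ⌊(N : ℝ) * Int.fract ((a : ℕ) * x : ℝ)⌋₊
  have hφ : Measurable φ := by
    refine measurable_pi_iff.2 fun a => ?_
    exact (((measurable_id.const_mul ((a : ℕ) : ℝ)).fract).const_mul (N : ℝ)).nat_floor
  let T : Finset (A → ℕ) := Fintype.piFinset fun _ => Finset.range N
  have hφT : ∀ x, φ x ∈ T := fun x => by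
    refine Fintype.mem_piFinset.2 fun a => Finset.mem_range.2 ?_
    refine (Nat.floor_lt (by positivity)).2 ?_
    exact mul_lt_of_lt_one_right hN' (Int.fract_lt_one _)
  have hcard : T.card = N ^ A.card := by simp [T]
  have hsum : ∑ c ∈ T, (volume.restrict (Ico (0 : ℝ) 1)).real (φ ⁻¹' {c}) = 1 := by
    rw [sum_measureReal_preimage_singleton T (fun c _ => hφ (measurableSet_singleton c))]
    have : φ ⁻¹' (T : Set (A → ℕ)) = univ := by
      ext x; simpa using hφT x
    rw [this]; simp
  obtain ⟨c, -, hc⟩ : ∃ c ∈ T, ((N : ℝ) ^ A.card)⁻¹ ≤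
      (volume.restrict (Ico (0 : ℝ) 1)).real (φ ⁻¹' {c}) := by
    refine Finset.exists_le_of_sum_le (s := T)
      ⟨φ 0, hφT 0⟩ ?_
    rw [hsum, Finset.sum_const, hcard, nsmul_eq_mul]
    push_cast
    rw [mul_inv_cancel₀ (by positivity)]
  refine ⟨φ ⁻¹' {c} ∩ Ico 0 1, (hφ (measurableSet_singleton c)).inter measurableSet_Ico,
    inter_subset_right, ?_, ?_⟩
  · rwa [measureReal_restrict_apply (hφ (measurableSet_singleton c))] at hc
  · rintro x ⟨hx, -⟩ y ⟨hy, -⟩ a ha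
    have hxy : φ x ⟨a, ha⟩ = φ y ⟨a, ha⟩ := by
      rw [mem_preimage, mem_singleton_iff] at hx hy
      rw [hx, hy]
    simp only [φ] at hxy
    have x1 := Nat.floor_le (a := (N : ℝ) * Int.fract ((a : ℝ) * x)) (by positivity)
    have x2 := Nat.lt_floor_add_one ((N : ℝ) * Int.fract ((a : ℝ) * x))
    have y1 := Nat.floor_le (a := (N : ℝ) * Int.fract ((a : ℝ) * y)) (by positivity)
    have y2 := Nat.lt_floor_add_one ((N : ℝ) * Int.fract ((a : ℝ) * y))
    rw [hxy] at x1 x2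
    refine ⟨⌊(a : ℝ) * x⌋ - ⌊(a : ℝ) * y⌋, ?_⟩
    have e : (a : ℝ) * (x - y) - ((⌊(a : ℝ) * x⌋ - ⌊(a : ℝ) * y⌋ : ℤ) : ℝ)
        = Int.fract ((a : ℝ) * x) - Int.fract ((a : ℝ) * y) := by
      unfold Int.fract; push_cast; ring
    have e' : ∀ d : ℝ, |d| * N = |d * N| := fun d => by rw [abs_mul, abs_of_pos hN']
    rw [e, le_div_iff₀ hN', e', abs_le]
    constructor <;> linarith

/-! ### Lower bounds for moments of periodic functions -/

open MeasureTheory Set in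
/-- A `1`-periodic continuous `G`, some translate of which is at least `Q ≥ 0` on a set of measure
at least `v`, has `2k`-th moment at least `v * Q ^ (2k)`. -/
lemma moment_ge (G : ℝ → ℝ) (hG : Continuous G) (hper : Function.Periodic G 1) (D : Set ℝ)
    (hD : MeasurableSet D) (hD1 : D ⊆ Ico 0 1) (t Q v : ℝ) (hQ : 0 ≤ Q) (hv : v ≤ volume.real D)
    (h : ∀ x ∈ D, Q ≤ G (x + t)) (k : ℕ) :
    v * Q ^ (2 * k) ≤ ∫ x in (0 : ℝ)..1, G x ^ (2 * k) := by
  have hper' : Function.Periodic (fun x => G x ^ (2 * k)) 1 := fun x => by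
    simp only [hper x]
  have e : ∫ x in (0 : ℝ)..1, G x ^ (2 * k) = ∫ x in (0 : ℝ)..1, G (x + t) ^ (2 * k) := by
    rw [intervalIntegral.integral_comp_add_right (fun x => G x ^ (2 * k)) t]
    have := hper'.intervalIntegral_add_eq 0 t
    rw [zero_add] at this
    rw [this, zero_add, add_comm 1 t]
  have hc : Continuous fun x => G (x + t) ^ (2 * k) := by fun_prop
  have hI : IntegrableOn (fun x => G (x + t) ^ (2 * k)) (Ico 0 1) :=
    (hc.integrableOn_Icc (a := 0) (b := 1)).mono_set Ico_subset_Icc_self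
  rw [e, intervalIntegral.integral_of_le zero_le_one, ← integral_Ico_eq_integral_Ioc]
  have hfin : volume D ≠ ⊤ := ((measure_mono hD1).trans_lt (by simp)).ne
  calc v * Q ^ (2 * k) ≤ volume.real D * Q ^ (2 * k) := by gcongr
    _ = ∫ _ in D, Q ^ (2 * k) := by rw [setIntegral_const, smul_eq_mul]
    _ ≤ ∫ x in D, G (x + t) ^ (2 * k) := by
        refine setIntegral_mono_on (integrableOn_const hfin) (hI.mono_set hD1) hD fun x hx => ?_
        exact pow_le_pow_left₀ hQ (h x hx) _
    _ ≤ ∫ x in Ico 0 1, G (x + t) ^ (2 * k) := by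
        refine setIntegral_mono_set hI (ae_of_all _ fun x => ?_) hD1.eventuallyLE
        exact (even_two_mul k).pow_nonneg _

/-- Passing from the moment to the norm: the factor `N ^ (-n / (2k))` costs less than `δ / 2`
once `Q * n * log N < δ * k`. -/
lemma root_gt (N n k : ℕ) (hN : 0 < N) (hk : 0 < k) (Q δ I : ℝ) (hQ : 0 < Q)
    (hI : ((N : ℝ) ^ n)⁻¹ * Q ^ (2 * k) ≤ I) (h : Q * (n * Real.log N) < δ * k) :
    Q - δ / 2 < I ^ (1 / (2 * (k : ℝ))) := by
  have hN' : (0 : ℝ) < N := by exact_mod_cast hN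
  have hk' : (0 : ℝ) < k := by exact_mod_cast hk
  have h1 : (((N : ℝ) ^ n)⁻¹ * Q ^ (2 * k)) ^ (1 / (2 * (k : ℝ))) ≤ I ^ (1 / (2 * (k : ℝ))) :=
    Real.rpow_le_rpow (by positivity) hI (by positivity)
  refine lt_of_lt_of_le ?_ h1
  have h2 : (Q ^ (2 * k)) ^ (1 / (2 * (k : ℝ))) = Q := by
    rw [← Real.rpow_natCast, ← Real.rpow_mul hQ.le]
    push_cast
    rw [mul_one_div_cancel (by positivity), Real.rpow_one]
  have h3 : (((N : ℝ) ^ n)⁻¹) ^ (1 / (2 * (k : ℝ)))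
      = Real.exp (-(n * Real.log N / (2 * k))) := by
    rw [Real.rpow_def_of_pos (by positivity), Real.log_inv, Real.log_pow]
    congr 1
    ring
  rw [Real.mul_rpow (by positivity) (by positivity), h2, h3]
  have h4 := Real.add_one_le_exp (-(n * Real.log N / (2 * k)))
  have h5 : Q * (n * Real.log N / (2 * k)) < δ / 2 := by
    rw [← mul_div_assoc, div_lt_div_iff₀ (by positivity) (by norm_num)]
    linarith
  nlinarith

/-! ### The choice of parameters -/

theorem moment_lower_bound (δ M₀ : ℝ) (hδ : 0 < δ) (hM₀ : 0 < M₀) :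
    ∃ C : ℝ, 0 < C ∧
      ∀ K : ℕ, 0 < K →
        ∀ A : Finset ℕ, A.Nonempty → (∀ a ∈ A, 0 < a) →
          ∀ n : ℕ, A.card = n →
            ∀ M mK : ℝ,
              M = sSup (Set.range fun x : ℝ => ∑ a ∈ A, Sel K (a * x)) →
              mK = -sInf (Set.range fun x : ℝ => Sel K x) →
              M ≤ M₀ →
              ∃ k : ℕ, 0 < k ∧ (k : ℝ) ≤ C * K * n ^ 2 * Real.log (C * n * K) ∧
                M + n * mK - δ <
                  (∫ x in (0 : ℝ)..1, (∑ a ∈ A, (Sel K (a * x) + mK)) ^ (2 * k)) ^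
                    (1 / (2 * (k : ℝ))) := by
  -- `m` makes the variation of `F` on a cell, at most `n * 562 * K ^ 2 / N` for
  -- `N = m * n * K ^ 2`, no larger than `δ / 4`.
  set m : ℕ := ⌈2248 / δ⌉₊ + 1 with hm
  have hm1 : 1 ≤ m := by omega
  have hm1' : (1 : ℝ) ≤ m := by exact_mod_cast hm1
  have hmδ : 2248 ≤ δ * m := by
    have h : 2248 / δ ≤ m := by
      rw [hm]; push_cast
      linarith [Nat.le_ceil (2248 / δ)]
    rwa [div_le_iff₀' hδ] at h
  set c : ℝ := 2 * (M₀ + 33) / δ with hcdef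
  have hc : 0 < c := by positivity
  refine ⟨c + m + 3, by positivity, ?_⟩
  intro K hK A hA _ n hn M mK hM hmK hMM
  have hn0 : 0 < n := hn ▸ hA.card_pos
  have hK1 : (1 : ℝ) ≤ K := by exact_mod_cast hK
  have hn1 : (1 : ℝ) ≤ n := by exact_mod_cast hn0
  have hnK : (1 : ℝ) ≤ n * K := one_le_mul_of_one_le_of_one_le hn1 hK1
  have hmK' : mK ≤ 33 * K := by
    rw [hmK, neg_le]
    refine le_csInf (Set.range_nonempty _) ?_
    rintro _ ⟨x, rfl⟩
    exact (abs_le.1 (Sel_abs_le K hK x)).1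
  have hP : M + n * mK ≤ (M₀ + 33) * (n * K) := by nlinarith
  set L : ℝ := Real.log (m * n * K) with hL
  have hmnK : (1 : ℝ) ≤ m * n * K := by
    rw [mul_assoc]; exact one_le_mul_of_one_le_of_one_le hm1' hnK
  have hL0 : 0 ≤ L := Real.log_nonneg hmnK
  set X : ℝ := c * K * n ^ 2 * L with hX
  have hX0 : 0 ≤ X := by positivity
  refine ⟨⌊X⌋₊ + 1, by omega, ?_, ?_⟩
  · set L' : ℝ := Real.log ((c + m + 3) * n * K) with hL'
    have hLL : L ≤ L' := by
      refine Real.log_le_log (by linarith) ?_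
      gcongr
      linarith
    have hL1 : 1 ≤ L' := by
      rw [hL', Real.le_log_iff_exp_le (by positivity), mul_assoc]
      nlinarith [Real.exp_one_lt_d9]
    have h1 : ((⌊X⌋₊ + 1 : ℕ) : ℝ) ≤ X + 1 := by
      push_cast; linarith [Nat.floor_le hX0]
    have h2 : X ≤ c * K * n ^ 2 * L' := by rw [hX]; gcongr
    have h3 : (1 : ℝ) ≤ K * n ^ 2 * L' :=
      one_le_mul_of_one_le_of_one_le
        (one_le_mul_of_one_le_of_one_le hK1 (one_le_pow₀ hn1)) hL1
    have h4 : 0 ≤ (m : ℝ) * (K * n ^ 2 * L') := by positivity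
    nlinarith
  have hkX : X < ((⌊X⌋₊ + 1 : ℕ) : ℝ) := by push_cast; exact Nat.lt_floor_add_one X
  generalize hk : ⌊X⌋₊ + 1 = k at hkX
  have hk0 : 0 < k := by omega
  rcases le_or_gt (M + n * mK) (δ / 2) with hsmall | hbig
  · refine lt_of_lt_of_le (by linarith) (Real.rpow_nonneg ?_ _)
    exact intervalIntegral.integral_nonneg zero_le_one fun x _ => (even_two_mul k).pow_nonneg _
  obtain ⟨_, ⟨x₀, rfl⟩, hx₀⟩ : ∃ s ∈ Set.range (fun x : ℝ => ∑ a ∈ A, Sel K (a * x)),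
      M - δ / 4 < s :=
    exists_lt_of_lt_csSup (Set.range_nonempty _) (by rw [← hM]; linarith)
  set N : ℕ := m * n * K ^ 2 with hNdef
  have hN : 0 < N := by positivity
  have hN' : (0 : ℝ) < N := by exact_mod_cast hN
  obtain ⟨D, hDm, hD1, hDv, hD⟩ := exists_cell A N hN
  rw [hn] at hDv
  have hDne : D.Nonempty := by
    by_contra hne
    rw [Set.not_nonempty_iff_eq_empty] at hne
    rw [hne, MeasureTheory.measureReal_empty] at hDv
    have : (0 : ℝ) < ((N : ℝ) ^ n)⁻¹ := by positivity
    linarith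
  obtain ⟨y, hy⟩ := hDne
  set G : ℝ → ℝ := fun x => ∑ a ∈ A, (Sel K (a * x) + mK) with hG
  have hGc : Continuous G := by
    have := Sel_cont K
    fun_prop
  have hGp : Function.Periodic G 1 := fun x => by
    simp only [hG]
    refine Finset.sum_congr rfl fun a _ => ?_
    have : (a : ℝ) * (x + 1) = a * x + ((a : ℤ) : ℝ) := by push_cast; ring
    rw [this, Sel_add_int]
  have hGD : ∀ x ∈ D, M + n * mK - δ / 2 ≤ G (x + (x₀ - y)) := by
    intro x hx
    have hpt : ∀ a ∈ A, Sel K (a * x₀) - 562 * K ^ 2 * (1 / N) ≤ Sel K (a * (x + (x₀ - y))) := by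
      intro a ha
      obtain ⟨j, hj⟩ := hD x hx y hy a ha
      have e : (a : ℝ) * (x + (x₀ - y)) = (a * x₀ + (a * (x - y) - j)) + j := by ring
      rw [e, Sel_add_int]
      have h := Sel_lip K hK (a * x₀ + (a * (x - y) - j)) (a * x₀)
      rw [add_sub_cancel_left] at h
      have h' : 562 * (K : ℝ) ^ 2 * |(a : ℝ) * (x - y) - j| ≤ 562 * K ^ 2 * (1 / N) := by gcongr
      linarith [(abs_le.1 h).1]
    have hs := Finset.sum_le_sum hpt
    rw [Finset.sum_sub_distrib, Finset.sum_const, hn, nsmul_eq_mul] at hs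
    have hG' : G (x + (x₀ - y)) = ∑ a ∈ A, Sel K (a * (x + (x₀ - y))) + n * mK := by
      simp only [hG]
      rw [Finset.sum_add_distrib, Finset.sum_const, hn, nsmul_eq_mul]
    have hsm : (n : ℝ) * (562 * K ^ 2 * (1 / N)) ≤ δ / 4 := by
      have e : (n : ℝ) * (562 * K ^ 2 * (1 / N)) = 562 / m := by
        rw [hNdef]; push_cast; field_simp
      rw [e, div_le_div_iff₀ (by positivity) (by norm_num)]
      linarith
    rw [hG']
    simp only at hx₀
    linarith
  have hQ : 0 < M + n * mK - δ / 2 := by linarith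
  have hmom := moment_ge G hGc hGp D hDm hD1 (x₀ - y) _ _ hQ.le hDv hGD k
  have hlogN : Real.log N ≤ 2 * L := by
    rw [hL, ← Real.log_rpow (by linarith)]
    refine Real.log_le_log hN' ?_
    rw [hNdef]
    have : (1 : ℝ) ≤ m * n := one_le_mul_of_one_le_of_one_le hm1' hn1
    norm_num
    have h2 : (m * n * K : ℝ) ^ 2 = (m * n) * ((m * n) * K ^ 2) := by ring
    rw [h2]
    exact le_mul_of_one_le_left (by positivity) this
  have hlogN0 : 0 ≤ Real.log N := Real.log_natCast_nonneg N
  have hfin : (M + n * mK - δ / 2) * (n * Real.log N) < δ * k := by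
    calc (M + n * mK - δ / 2) * (n * Real.log N)
        ≤ ((M₀ + 33) * (n * K)) * (n * (2 * L)) := by
          gcongr
          linarith
      _ = δ * X := by rw [hX, hcdef]; field_simp
      _ < δ * k := by gcongr
  have := root_gt N n k hN hk0 _ δ _ hQ hmom hfin
  linarith
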